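/- The higher Haantjes torsions are tensorial: for every smooth operator field L on ℝⁿ, every m ≥ 1, every smooth function f : ℝⁿ → ℝ and all smooth vector fields ξ, η, one has T^{(m)}_L(f·ξ, η) = f·T^{(m)}_L(ξ, η) and T^{(m)}_L(ξ, f·η) = f·T^{(m)}_L(ξ, η) (pointwise on ℝⁿ). -/

import Mathlib

/-!
The Lie bracket is not tensorial, but its failure is explicit: `[fξ, η] = f[ξ, η] - η(f) ξ` and
`[ξ, fη] = f[ξ, η] + ξ(f) η` (`lieB_smul_left`, `lieB_smul_right`). In `T_L(fξ, η)` the four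
derivative terms are `η(f) L²ξ` and `(Lη)(f) Lξ`, each occurring once with either sign, so they
cancel; in `T_L(ξ, fη)` the same happens with `ξ(f) L²η` and `(Lξ)(f) Lη` (`nijTor_smul_left`,
`nijTor_smul_right`). The recursion defining the higher torsions uses
only compositions with the pointwise action of `L`, which commutes with multiplication by `f` and
preserves smoothness, so tensoriality passes from each level to the next for all smooth `ξ`, `η`.
-/

open Matrix

/-- A vector field on ℝⁿ. -/
abbrev Vec (n : ℕ) := Fin n → ℝ
abbrev VF (n : ℕ) := Vec n → Vec n
abbrev OpField (n : ℕ) := Vec n → Matrix (Fin n) (Fin n) ℝ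

/-- Smooth (C^∞) vector field. -/
def SmoothVF {n : ℕ} (ξ : VF n) : Prop := ContDiff ℝ (⊤ : ℕ∞) ξ

/-- Smooth (C^∞) operator field, entrywise. -/
def SmoothOp {n : ℕ} (L : OpField n) : Prop :=
  ∀ i j : Fin n, ContDiff ℝ (⊤ : ℕ∞) fun x => L x i j

/-- Lie bracket of vector fields. -/
noncomputable def lieB {n : ℕ} (ξ η : VF n) : VF n :=
  fun x => fderiv ℝ η x (ξ x) - fderiv ℝ ξ x (η x)

/-- Pointwise action of an operator field on a vector field. -/
def app {n : ℕ} (L : OpField n) (ξ : VF n) : VF n := fun x => (L x).mulVec (ξ x)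

/-- Nijenhuis torsion. -/
noncomputable def nijTor {n : ℕ} (L : OpField n) (ξ η : VF n) : VF n :=
  app L (app L (lieB ξ η)) + lieB (app L ξ) (app L η)
    - app L (lieB (app L ξ) η) - app L (lieB ξ (app L η))

/-- Generalized Haantjes torsion: `genTor L m` is the torsion of level `m + 1`,
so `genTor L 0` is the Nijenhuis torsion `T^{(1)}_L` and `genTor L (m-1) = T^{(m)}_L`. -/
noncomputable def genTor {n : ℕ} (L : OpField n) : ℕ → VF n → VF n → VF n
  | 0 => nijTor L
  | m + 1 => fun ξ η =>
      app L (app L (genTor L m ξ η)) + genTor L m (app L ξ) (app L η)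
        - app L (genTor L m (app L ξ) η) - app L (genTor L m ξ (app L η))

/-- The Haantjes torsion `H_L = T^{(2)}_L`. -/
noncomputable def haantjes {n : ℕ} (L : OpField n) : VF n → VF n → VF n := genTor L 1

/-- Frölicher–Nijenhuis bracket of two operator fields. -/
noncomputable def fnB {n : ℕ} (K L : OpField n) (ξ η : VF n) : VF n :=
  lieB (app K ξ) (app L η) + lieB (app L ξ) (app K η)
    - app L (lieB (app K ξ) η) - app L (lieB ξ (app K η))
    - app K (lieB (app L ξ) η) - app K (lieB ξ (app L η))
    + app L (app K (lieB ξ η)) + app K (app L (lieB ξ η))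

/-- Generalized Haantjes bracket: `genB K L m` is the bracket of level `m + 1`,
so `genB K L 0 = [[K,L]]` and `genB K L (m-1) = H^{(m)}_{K,L}`. -/
noncomputable def genB {n : ℕ} (K L : OpField n) : ℕ → VF n → VF n → VF n
  | 0 => fnB K L
  | m + 1 => fun ξ η =>
      app K (app L (genB K L m ξ η)) + genB K L m (app K ξ) (app L η)
        - app L (genB K L m (app K ξ) η) - app K (genB K L m ξ (app L η))
        + app L (app K (genB K L m ξ η)) + genB K L m (app L ξ) (app K η)
        - app K (genB K L m (app L ξ) η) - app L (genB K L m ξ (app K η))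

/-- Upper triangular matrix. -/
def UpperTri {n : ℕ} (A : Matrix (Fin n) (Fin n) ℝ) : Prop :=
  ∀ i j : Fin n, j < i → A i j = 0

/-- Strictly upper triangular matrix. -/
def StrictUpperTri {n : ℕ} (A : Matrix (Fin n) (Fin n) ℝ) : Prop :=
  ∀ i j : Fin n, j ≤ i → A i j = 0

/-- Jacobian matrix of a map `f : ℝⁿ → ℝⁿ` at a point. -/
noncomputable def jacobianMatrix {n : ℕ} (f : VF n) (x : Vec n) :
    Matrix (Fin n) (Fin n) ℝ :=
  Matrix.of fun i j => fderiv ℝ f x (Pi.single j 1) i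

/-- `L` is locally reducible, near `p`, to a form whose matrix satisfies `P`
(e.g. upper triangularity) in suitable local coordinates: there are an open
neighbourhood `U` of `p` and a smooth diffeomorphism `φ` from `U` onto an open
set, with smooth inverse `ψ`, such that the pushforward operator field
`y ↦ Dφ(φ⁻¹ y) · L(φ⁻¹ y) · (Dφ(φ⁻¹ y))⁻¹ = Dφ(ψ y) · L(ψ y) · Dψ(y)`
satisfies `P` at every point of `φ '' U`. -/
def LocallyReducible {n : ℕ} (L : OpField n) (p : Vec n)
    (P : Matrix (Fin n) (Fin n) ℝ → Prop) : Prop :=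
  ∃ U : Set (Vec n), IsOpen U ∧ p ∈ U ∧
    ∃ φ ψ : VF n,
      ContDiffOn ℝ (⊤ : ℕ∞) φ U ∧ IsOpen (φ '' U) ∧
      ContDiffOn ℝ (⊤ : ℕ∞) ψ (φ '' U) ∧
      (∀ x ∈ U, ψ (φ x) = x) ∧ (∀ y ∈ φ '' U, φ (ψ y) = y) ∧
      ∀ y ∈ φ '' U, P (jacobianMatrix φ (ψ y) * L (ψ y) * jacobianMatrix ψ y)


section Action

variable {n : ℕ} (L : OpField n)

lemma app_smul (f : Vec n → ℝ) (ξ : VF n) :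
    app L (fun y => f y • ξ y) = fun y => f y • app L ξ y := by
  funext x
  simp [app, Matrix.mulVec_smul]

lemma SmoothOp.smoothVF_app {L : OpField n} (hL : SmoothOp L) {ξ : VF n} (hξ : SmoothVF ξ) :
    SmoothVF (app L ξ) := by
  refine contDiff_pi.2 fun i => ?_
  have h : ∀ j, ContDiff ℝ (⊤ : ℕ∞) fun x => L x i j * ξ x j :=
    fun j => (hL i j).mul (contDiff_pi.1 hξ j)
  change ContDiff ℝ (⊤ : ℕ∞) fun x => ∑ j, L x i j * ξ x j
  exact ContDiff.sum fun j _ => h j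

lemma SmoothVF.differentiable {ξ : VF n} (hξ : SmoothVF ξ) : Differentiable ℝ ξ :=
  ContDiff.differentiable hξ (by simp)

lemma lieB_smul_right {f : Vec n → ℝ} (hf : Differentiable ℝ f) (ξ : VF n) {η : VF n}
    (hη : Differentiable ℝ η) (x : Vec n) :
    lieB ξ (fun y => f y • η y) x = f x • lieB ξ η x + fderiv ℝ f x (ξ x) • η x := by
  simp only [lieB, fderiv_fun_smul (hf x) (hη x), _root_.add_apply,
    _root_.smul_apply, ContinuousLinearMap.smulRight_apply, map_smul, smul_sub]
  abel

lemma lieB_smul_left {f : Vec n → ℝ} (hf : Differentiable ℝ f) {ξ : VF n}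
    (hξ : Differentiable ℝ ξ) (η : VF n) (x : Vec n) :
    lieB (fun y => f y • ξ y) η x = f x • lieB ξ η x - fderiv ℝ f x (η x) • ξ x := by
  simp only [lieB, fderiv_fun_smul (hf x) (hξ x), _root_.add_apply,
    _root_.smul_apply, ContinuousLinearMap.smulRight_apply, map_smul, smul_sub]
  abel

lemma nijTor_smul_left {f : Vec n → ℝ} (hf : Differentiable ℝ f) {ξ : VF n}
    (hξ : Differentiable ℝ ξ) (hLξ : Differentiable ℝ (app L ξ)) (η : VF n) :
    nijTor L (fun y => f y • ξ y) η = fun y => f y • nijTor L ξ η y := by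
  funext x
  simp only [nijTor, app_smul, Pi.add_apply, Pi.sub_apply, lieB_smul_left hf hLξ]
  have key : ∀ ζ : VF n, app L ζ x = L x *ᵥ ζ x := fun _ => rfl
  simp only [key, lieB_smul_left hf hξ, lieB_smul_left hf hLξ, Matrix.mulVec_sub,
    Matrix.mulVec_smul, smul_add, smul_sub]
  abel

lemma nijTor_smul_right {f : Vec n → ℝ} (hf : Differentiable ℝ f) (ξ : VF n) {η : VF n}
    (hη : Differentiable ℝ η) (hLη : Differentiable ℝ (app L η)) :
    nijTor L ξ (fun y => f y • η y) = fun y => f y • nijTor L ξ η y := by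
  funext x
  simp only [nijTor, app_smul, Pi.add_apply, Pi.sub_apply, lieB_smul_right hf _ hLη]
  have key : ∀ ζ : VF n, app L ζ x = L x *ᵥ ζ x := fun _ => rfl
  simp only [key, lieB_smul_right hf _ hη, lieB_smul_right hf _ hLη, Matrix.mulVec_add,
    Matrix.mulVec_smul, smul_add, smul_sub]
  abel

lemma genTor_smul_left {L : OpField n} (hL : SmoothOp L) {f : Vec n → ℝ}
    (hf : Differentiable ℝ f) (m : ℕ) {ξ : VF n} (hξ : SmoothVF ξ) (η : VF n) :
    genTor L m (fun y => f y • ξ y) η = fun y => f y • genTor L m ξ η y := by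
  induction m generalizing ξ η with
  | zero => exact nijTor_smul_left L hf hξ.differentiable (hL.smoothVF_app hξ).differentiable η
  | succ m ih =>
    funext x
    simp only [genTor, app_smul, ih hξ, ih (hL.smoothVF_app hξ), Pi.add_apply, Pi.sub_apply, smul_add,
      smul_sub]

lemma genTor_smul_right {L : OpField n} (hL : SmoothOp L) {f : Vec n → ℝ}
    (hf : Differentiable ℝ f) (m : ℕ) (ξ : VF n) {η : VF n} (hη : SmoothVF η) :
    genTor L m ξ (fun y => f y • η y) = fun y => f y • genTor L m ξ η y := by
  induction m generalizing ξ η with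
  | zero => exact nijTor_smul_right L hf ξ hη.differentiable (hL.smoothVF_app hη).differentiable
  | succ m ih =>
    funext x
    simp only [genTor, app_smul, ih _ hη, ih _ (hL.smoothVF_app hη), Pi.add_apply, Pi.sub_apply, smul_add,
      smul_sub]

end Action

/-- the higher Haantjes torsions `T^{(m)}_L = genTor L (m - 1)`,
`m ≥ 1`, are tensorial in both arguments. -/
theorem stmt_11 (n : ℕ) (L : OpField n) (hL : SmoothOp L) (m : ℕ)
    (f : Vec n → ℝ) (hf : ContDiff ℝ (⊤ : ℕ∞) f)
    (ξ η : VF n) (hξ : SmoothVF ξ) (hη : SmoothVF η) :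
    (∀ x : Vec n, genTor L m (fun y => f y • ξ y) η x = f x • genTor L m ξ η x) ∧
    (∀ x : Vec n, genTor L m ξ (fun y => f y • η y) x = f x • genTor L m ξ η x) := by
  have hf' : Differentiable ℝ f := hf.differentiable (by simp)
  exact ⟨fun x => congrFun (genTor_smul_left hL hf' m hξ η) x,
    fun x => congrFun (genTor_smul_right hL hf' m ξ hη) x⟩
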